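/- arXiv:2201.05378 — 2 statements merged into one kernel-verified Lean document; each statement's English description precedes it below -/
import Mathlib

section
/- Let p be a prime with p ≡ 1 (mod 3) (and p odd). Then Σ_{k=0}^{(p−1)/3} (−1)^k (1/3)_k^3 / k!^3 ≡ (−1)^{(p−1)/3} · p · Σ_{k=0}^{(p−1)/3} (1/3)_k^2 (1/2)_k / (k! (2/3)_k (7/6)_k) (mod p^2). -/
open Finset

/-- The Pochhammer symbol `(a)_k = a(a+1)⋯(a+k-1)` for rational `a`. -/
def poch (a : ℚ) (k : ℕ) : ℚ := ∏ j ∈ Finset.range k, (a + j)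

theorem poch_succ (a : ℚ) (k : ℕ) : poch a (k+1) = poch a k * (a + k) := by
  simp [poch, Finset.prod_range_succ]

theorem poch_zero (a : ℚ) : poch a 0 = 1 := by simp [poch]

theorem poch_add (a : ℚ) (m n : ℕ) : poch a (m+n) = poch a m * poch (a+m) n := by
  simp only [poch, Finset.prod_range_add]
  congr 1
  apply Finset.prod_congr rfl
  intro j _
  push_cast; ring

theorem poch_succ_left (a : ℚ) (n : ℕ) : poch a (n+1) = a * poch (a+1) n := by
  rw [add_comm n 1, poch_add]
  simp [poch]

theorem poch_pos (a : ℚ) (ha : 0 < a) (k : ℕ) : 0 < poch a k := by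
  unfold poch
  apply Finset.prod_pos
  intro j _
  positivity

theorem vander (N : ℕ) : ∀ b c : ℚ,
    ∑ i ∈ Finset.range (N+1), (-1 : ℚ)^i * (N.choose i) * poch b i * poch (c+i) (N-i)
      = poch (c-b) N := by
  induction N with
  | zero => intro b c; simp [poch]
  | succ N ih =>
    intro b c
    have h1 : ∑ i ∈ Finset.range (N+1), (-1 : ℚ)^i * (N.choose i) * poch b i * poch (c+i) (N+1-i)
        = (c+N) * poch (c-b) N := by
      rw [← ih, Finset.mul_sum]
      apply Finset.sum_congr rfl
      intro i hi
      have hi' : i ≤ N := by simpa [Nat.lt_succ_iff] using hi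
      rw [Nat.sub_add_comm hi', poch_succ, Nat.cast_sub hi']
      ring
    have h2 : ∑ i ∈ Finset.range (N+1), (-1 : ℚ)^i * (N.choose i) * poch b (i+1) * poch (c+(i+1:ℕ)) (N-i)
        = b * poch (c-b) N := by
      have := ih (b+1) (c+1)
      rw [show c + 1 - (b+1) = c - b by ring] at this
      rw [← this, Finset.mul_sum]
      apply Finset.sum_congr rfl
      intro i hi
      rw [poch_succ_left, show c + ((i+1:ℕ):ℚ) = c + 1 + i by push_cast; ring]
      ring
    have h3 : ∑ i ∈ Finset.range (N+2), (-1 : ℚ)^i * ((N.choose i : ℕ) : ℚ) * poch b i * poch (c+i) (N+1-i)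
        = (c+N) * poch (c-b) N := by
      rw [Finset.sum_range_succ, h1]; simp
    rw [Finset.sum_range_succ'] at h3 ⊢
    have h4 : ∀ i ∈ Finset.range (N+1), (-1 : ℚ)^(i+1) * ((N+1).choose (i+1)) * poch b (i+1) * poch (c+(i+1:ℕ)) (N+1-(i+1))
      = (-1 : ℚ)^(i+1) * (N.choose (i+1)) * poch b (i+1) * poch (c+(i+1:ℕ)) (N+1-(i+1))
        - (-1 : ℚ)^i * (N.choose i) * poch b (i+1) * poch (c+(i+1:ℕ)) (N-i) := by
      intro i _
      rw [Nat.choose_succ_succ, Nat.add_sub_add_right]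
      push_cast; ring
    rw [Finset.sum_congr rfl h4, Finset.sum_sub_distrib, h2]
    simp only [Nat.choose_zero_right] at h3 ⊢
    rw [poch_succ]
    linear_combination h3

theorem choose_q (n i : ℕ) (h : i ≤ n) :
    ((n.choose i : ℕ) : ℚ) = n.factorial / (i.factorial * (n-i).factorial) := by
  rw [Nat.cast_choose ℚ h]

/-- inner sum -/
theorem inner_vander (a : ℚ) (ha : 0 < a) (j : ℕ) :
    ∑ r ∈ Finset.range (j+1), (-1 : ℚ)^r * poch a r /
      (r.factorial * (j-r).factorial * poch (1+a) (j+r))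
    = poch (1+j) j / (j.factorial * poch (1+a) (2*j)) := by
  have h := vander j a (1+a+j)
  rw [show 1+a+(j:ℚ)-a = 1+j by ring] at h
  rw [← h, Finset.sum_div]
  apply Finset.sum_congr rfl
  intro r hr
  have hr' : r ≤ j := by simpa [Nat.lt_succ_iff] using hr
  have e : poch (1+a) (2*j) = poch (1+a) (j+r) * poch (1+a+j+r) (j-r) := by
    rw [show 2*j = (j+r) + (j-r) by omega, poch_add]
    push_cast; rw [add_assoc (1+a)]
  have p1 := (poch_pos (1+a) (by positivity) (j+r)).ne'
  have p2 := (poch_pos (1+a+j+r) (by positivity) (j-r)).ne'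
  have f1 : (r.factorial : ℚ) ≠ 0 := by positivity
  have f2 : (j.factorial : ℚ) ≠ 0 := by positivity
  have f3 : ((j-r).factorial : ℚ) ≠ 0 := by positivity
  rw [e, choose_q j r hr']
  field_simp

theorem bailey_step (A d : ℚ) (hA : 0 < A) (r n : ℕ) (h : r ≤ n) (hc : ∀ k, poch (A-d) k ≠ 0) :
    poch d r / (poch (A-d) r * (n-r).factorial * poch A (n+r))
    = 1 / poch (A-d) n * ∑ j ∈ Finset.Ico r (n+1), (-1:ℚ)^(j-r) * poch d j /
      ((n-j).factorial * (j-r).factorial * poch A (j+r)) := by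
  obtain ⟨N, rfl⟩ := Nat.exists_eq_add_of_le h
  rw [Finset.sum_Ico_eq_sum_range, show r + N + 1 - r = N + 1 by omega]
  have h := vander N (d+r) (A+2*r)
  rw [show A + 2*(r:ℚ) - (d+r) = A-d+r by ring] at h
  have e0 := poch_add (A-d) r N
  have h0 := hc (r+N)
  have h1 := hc r
  have e1 : poch A (r+N+r) = poch A (2*r) * poch (A+2*r) N := by
    rw [show r+N+r = 2*r+N by ring, poch_add]; push_cast; rfl
  have q1 := (poch_pos A hA (2*r)).ne'
  have q2 := (poch_pos (A+2*r) (by positivity) N).ne'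
  have f3 : (N.factorial : ℚ) ≠ 0 := by positivity
  have key : ∑ j ∈ Finset.range (N+1), (-1:ℚ)^(r+j-r) * poch d (r+j) /
      ((r+N-(r+j)).factorial * (r+j-r).factorial * poch A (r+j+r))
      = poch d r / (N.factorial * poch A (r+N+r)) * poch (A-d+r) N := by
    rw [← h, Finset.mul_sum]
    apply Finset.sum_congr rfl
    intro i hi
    have hi' : i ≤ N := by simpa [Nat.lt_succ_iff] using hi
    have e : poch A (r+N+r) = poch A (r+i+r) * poch (A+2*r+i) (N-i) := by
      rw [show r+N+r = (r+i+r) + (N-i) by omega, poch_add]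
      congr 2; push_cast; ring
    have p1 := (poch_pos A (by positivity) (r+i+r)).ne'
    have p2 := (poch_pos (A+2*r+i) (by positivity) (N-i)).ne'
    have f1 : (i.factorial : ℚ) ≠ 0 := by positivity
    have f2 : ((N-i).factorial : ℚ) ≠ 0 := by positivity
    rw [e, choose_q N i hi', poch_add d r i, Nat.add_sub_cancel_left, Nat.add_sub_add_left]
    generalize poch (A+2*r+i) (N-i) = X at *
    field_simp
  rw [key, Nat.add_sub_cancel_left]
  rw [e0] at h0 ⊢
  have h2 := right_ne_zero_of_mul h0
  have q3 := (poch_pos A hA (r+N+r)).ne'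
  field_simp

theorem dup1 (j : ℕ) : poch (1+j) j = 4^j * poch (1/2) j := by
  have h : ∀ j : ℕ, poch (1+j) j * j.factorial = (2*j).factorial := by
    intro j
    have h1 : ∀ k : ℕ, poch 1 k = k.factorial := by
      intro k
      induction k with
      | zero => simp [poch]
      | succ k ih => rw [poch_succ, ih, Nat.factorial_succ]; push_cast; ring
    rw [← h1, ← h1, two_mul, poch_add]; ring
  have h2 : ∀ j : ℕ, ((2*j).factorial : ℚ) = 4^j * poch (1/2) j * j.factorial := by
    intro j
    induction j with
    | zero => simp [poch]
    | succ k ih =>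
      rw [show 2*(k+1) = 2*k+1+1 by ring, Nat.factorial_succ, Nat.factorial_succ, poch_succ,
        Nat.factorial_succ]
      push_cast
      rw [ih]; ring
  have f : (j.factorial : ℚ) ≠ 0 := by positivity
  have := (h j).trans (h2 j)
  exact mul_right_cancel₀ f this

theorem dup2 (j : ℕ) : poch (1+1/3) (2*j) = 4^j * (poch (2/3) j * poch (7/6) j) := by
  induction j with
  | zero => simp [poch]
  | succ k ih =>
    rw [show 2*(k+1) = 2*k+1+1 by ring, poch_succ, poch_succ, ih, poch_succ, poch_succ]
    push_cast
    ring

theorem poch_neg (n k : ℕ) (h : k ≤ n) :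
    poch (-n) k = (-1)^k * n.factorial / (n-k).factorial := by
  induction k with
  | zero => rw [poch_zero]; field_simp; simp
  | succ k ih =>
    rw [poch_succ, ih (by omega)]
    obtain ⟨m, rfl⟩ := Nat.exists_eq_add_of_le h
    rw [show k+1+m-k = m+1 by omega, Nat.add_sub_cancel_left, Nat.factorial_succ m]
    push_cast
    field_simp
    ring

theorem exact_id (d : ℚ) (n : ℕ) (hc : ∀ k, poch (1+1/3-d) k ≠ 0) :
    ∑ k ∈ Finset.range (n+1), (-1:ℚ)^k * poch (1/3) k * (poch d k * poch (-n) k) /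
      (k.factorial * (poch (1+1/3-d) k * poch (1+1/3+n) k))
    = poch (1+1/3) n / poch (1+1/3-d) n *
      ∑ k ∈ Finset.range (n+1), (poch d k * poch (-n) k) * poch (1/2) k /
        (k.factorial * poch (2/3) k * poch (7/6) k) := by
  have l1 : ∀ k ∈ Finset.range (n+1), (-1:ℚ)^k * poch (1/3) k * (poch d k * poch (-n) k) /
      (k.factorial * (poch (1+1/3-d) k * poch (1+1/3+n) k))
      = ∑ j ∈ Finset.Ico k (n+1), n.factorial * poch (1+1/3) n / poch (1+1/3-d) n *
         (poch (1/3) k / k.factorial * ((-1:ℚ)^(j-k) * poch d j /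
      ((n-j).factorial * (j-k).factorial * poch (1+1/3) (j+k)))) := by
    intro k hk
    have hk' : k ≤ n := by simpa [Nat.lt_succ_iff] using hk
    have b := bailey_step (1+1/3) d (by norm_num) k n hk' hc
    rw [← Finset.mul_sum, ← Finset.mul_sum]
    have : n.factorial * poch (1+1/3) n / poch (1+1/3-d) n *
         (poch (1/3) k / k.factorial * ∑ j ∈ Finset.Ico k (n+1), ((-1:ℚ)^(j-k) * poch d j /
      ((n-j).factorial * (j-k).factorial * poch (1+1/3) (j+k)))) =
       n.factorial * poch (1+1/3) n * poch (1/3) k / k.factorial *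
        (poch d k / (poch (1+1/3-d) k * (n-k).factorial * poch (1+1/3) (n+k))) := by
      rw [b]; ring
    rw [this, poch_add, poch_neg n k hk']
    have p1 := (poch_pos (1+1/3) (by norm_num) n).ne'
    have p2 := (poch_pos (1+1/3+n) (by positivity) k).ne'
    have p3 := hc k
    have s : ((-1:ℚ)^k)*(-1)^k = 1 := by rw [← mul_pow]; simp
    have f1 : (k.factorial : ℚ) ≠ 0 := by positivity
    have f2 : ((n-k).factorial : ℚ) ≠ 0 := by positivity
    generalize (-1:ℚ)^k = s at *
    generalize poch (1+1/3) n = X1 at *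
    generalize poch (1+1/3+n) k = X2 at *
    generalize poch (1+1/3-d) k = X3 at *
    field_simp
    linear_combination (poch (1/3) k * poch d k) * s
  rw [Finset.sum_congr rfl l1, Finset.range_eq_Ico, Finset.sum_Ico_Ico_comm, Finset.mul_sum]
  apply Finset.sum_congr rfl
  intro j hj
  have hj' : j ≤ n := by simpa [Nat.lt_succ_iff] using hj
  have i := inner_vander (1/3) (by norm_num) j
  rw [dup1, dup2] at i
  have e : ∀ k ∈ Finset.Ico 0 (j+1), n.factorial * poch (1+1/3) n / poch (1+1/3-d) n *
         (poch (1/3) k / k.factorial * ((-1:ℚ)^(j-k) * poch d j /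
      ((n-j).factorial * (j-k).factorial * poch (1+1/3) (j+k))))
      = n.factorial * poch (1+1/3) n / poch (1+1/3-d) n * poch d j / (n-j).factorial * (-1)^j *
       ((-1 : ℚ)^k * poch (1/3) k /
      (k.factorial * (j-k).factorial * poch (1+1/3) (j+k))) := by
    intro k hk
    have hk' : k ≤ j := by simpa [Nat.lt_succ_iff] using hk
    have : (-1:ℚ)^(j-k) = (-1)^j * (-1)^k := by
      obtain ⟨m, rfl⟩ := Nat.exists_eq_add_of_le hk'
      have s : ((-1:ℚ)^k)*(-1)^k = 1 := by rw [← mul_pow]; simp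
      rw [Nat.add_sub_cancel_left, pow_add]
      linear_combination -(-1:ℚ)^m * s
    rw [this]
    ring
  rw [Finset.sum_congr rfl e, ← Finset.mul_sum, ← Finset.range_eq_Ico, i, poch_neg n j hj']
  have p1 := (poch_pos (2/3) (by norm_num) j).ne'
  have p2 := (poch_pos (7/6) (by norm_num) j).ne'
  have p3 := hc n
  field_simp

section padic
variable {K : Type*} [NormedField K] [IsUltrametricDist K]

theorem cong_mul {ε : ℝ} {x x' y y' : K} (hx : ‖x‖ ≤ 1) (hy : ‖y'‖ ≤ 1)
    (h1 : ‖x - x'‖ ≤ ε) (h2 : ‖y - y'‖ ≤ ε) : ‖x*y - x'*y'‖ ≤ ε := by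
  have : x*y - x'*y' = x*(y-y') + (x-x')*y' := by ring
  rw [this]
  refine (IsUltrametricDist.norm_add_le_max _ _).trans (max_le ?_ ?_)
  · rw [norm_mul]
    nlinarith [norm_nonneg x, norm_nonneg (y-y')]
  · rw [norm_mul]
    nlinarith [norm_nonneg y', norm_nonneg (x-x')]

theorem cong_int {ε : ℝ} (hε : ε ≤ 1) {x x' : K} (hx : ‖x‖ ≤ 1) (h : ‖x-x'‖ ≤ ε) : ‖x'‖ ≤ 1 := by
  have : x' = x - (x - x') := by ring
  rw [this, sub_eq_add_neg]
  refine (IsUltrametricDist.norm_add_le_max _ _).trans (max_le hx ?_)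
  rw [norm_neg]; linarith

theorem cong_unit {ε : ℝ} (hε : ε < 1) {x x' : K} (hx : ‖x‖ = 1) (h : ‖x-x'‖ ≤ ε) : ‖x'‖ = 1 := by
  have h1 := cong_int hε.le hx.le h
  refine le_antisymm h1 ?_
  have : x = x' + (x - x') := by ring
  have h2 := IsUltrametricDist.norm_add_le_max x' (x-x')
  rw [← this, hx] at h2
  rcases le_max_iff.1 h2 with h3 | h3
  · exact h3
  · linarith

theorem cong_prod {ε : ℝ} (h0 : 0 ≤ ε) (hε : ε ≤ 1) (k : ℕ) (u w : ℕ → K)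
    (hu : ∀ j < k, ‖u j‖ ≤ 1) (h : ∀ j < k, ‖u j - w j‖ ≤ ε) :
    ‖∏ j ∈ Finset.range k, u j‖ ≤ 1 ∧
    ‖∏ j ∈ Finset.range k, u j - ∏ j ∈ Finset.range k, w j‖ ≤ ε := by
  induction k with
  | zero => simpa using h0
  | succ k ih =>
    have := ih (fun j hj => hu j (by omega)) (fun j hj => h j (by omega))
    rw [Finset.prod_range_succ, Finset.prod_range_succ]
    constructor
    · rw [norm_mul]
      exact mul_le_one₀ this.1 (norm_nonneg _) (hu k (by omega))
    · exact cong_mul this.1 (cong_int hε (hu k (by omega)) (h k (by omega))) this.2 (h k (by omega))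

theorem cong_inv {ε : ℝ} (hε : ε < 1) {x x' : K} (hx : ‖x‖ = 1) (h : ‖x-x'‖ ≤ ε) :
    ‖x⁻¹ - x'⁻¹‖ ≤ ε := by
  have h1 := cong_unit hε hx h
  have n1 : x ≠ 0 := by intro h; simp [h] at hx
  have n2 : x' ≠ 0 := by intro h; simp [h] at h1
  have : x⁻¹ - x'⁻¹ = - (x - x') * x⁻¹ * x'⁻¹ := by field_simp; ring
  rw [this]
  simpa [norm_mul, norm_inv, hx, h1, norm_sub_rev] using h

theorem cong_sum {ε : ℝ} (h0 : 0 ≤ ε) (k : ℕ) (u : ℕ → K)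
    (h : ∀ j < k, ‖u j‖ ≤ ε) : ‖∑ j ∈ Finset.range k, u j‖ ≤ ε := by
  induction k with
  | zero => simpa using h0
  | succ k ih =>
    rw [Finset.sum_range_succ]
    exact (IsUltrametricDist.norm_add_le_max _ _).trans
      (max_le (ih (fun j hj => h j (by omega))) (h k (by omega)))

end padic

theorem norm_nat_unit (p : ℕ) [Fact p.Prime] (m : ℕ) (h : ¬ p ∣ m) : ‖(m : ℚ_[p])‖ = 1 := by
  refine le_antisymm (by simpa using Padic.norm_int_le_one (p := p) m) ?_
  by_contra hlt
  push Not at hlt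
  have := (Padic.norm_intCast_lt_one_iff (p := p) (k := (m:ℤ))).1 (by simpa using hlt)
  exact h (by exact_mod_cast this)

theorem norm_nat_le (p : ℕ) [Fact p.Prime] (m : ℕ) : ‖(m : ℚ_[p])‖ ≤ 1 := by
  simpa using Padic.norm_int_le_one (p := p) m

theorem norm_frac_le (p : ℕ) [Fact p.Prime] (a b : ℕ) (h : ¬ p ∣ b) :
    ‖((a / b : ℚ) : ℚ_[p])‖ ≤ 1 := by
  push_cast
  rw [norm_div, norm_nat_unit p b h, div_one]
  exact norm_nat_le p a

theorem norm_frac_unit (p : ℕ) [Fact p.Prime] (a b : ℕ) (h : ¬ p ∣ b) (ha : ¬ p ∣ a) :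
    ‖((a / b : ℚ) : ℚ_[p])‖ = 1 := by
  push_cast
  rw [norm_div, norm_nat_unit p b h, div_one]
  exact norm_nat_unit p a ha

theorem norm_poch_le (p : ℕ) [Fact p.Prime] (a b k : ℕ) (hb : b ≠ 0) (h : ¬ p ∣ b) :
    ‖((poch (a/b) k : ℚ) : ℚ_[p])‖ ≤ 1 := by
  unfold poch
  rw [Rat.cast_prod, norm_prod]
  apply Finset.prod_le_one
  · intros; positivity
  · intro j _
    have := norm_frac_le p (a + b*j) b h
    have e : ((a:ℚ)/b + j) = ((a + b*j : ℕ):ℚ)/b := by push_cast; field_simp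
    rw [e]; exact this

theorem norm_poch_unit (p : ℕ) [Fact p.Prime] (a b k : ℕ) (hb : b ≠ 0) (h : ¬ p ∣ b)
    (ha : ∀ j < k, ¬ p ∣ a + b * j) :
    ‖((poch (a/b) k : ℚ) : ℚ_[p])‖ = 1 := by
  unfold poch
  rw [Rat.cast_prod, norm_prod]
  apply Finset.prod_eq_one
  intro j hj
  have := norm_frac_unit p (a + b*j) b h (ha j (by simpa using hj))
  have e : ((a:ℚ)/b + j) = ((a + b*j : ℕ):ℚ)/b := by push_cast; field_simp
  rw [e]; exact this

theorem norm_poch76 (p n : ℕ) [Fact p.Prime] (h6 : ¬ p ∣ 6) (hn : p = 3 * n + 1) (h2 : p % 2 = 1) (k : ℕ) (hk : k ≤ n) :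
    (6*k+1 < p → ‖((poch (7/6) k : ℚ) : ℚ_[p])‖ = 1) ∧
    (p ≤ 6*k+1 → 1 < p → ‖((poch (7/6) k : ℚ) : ℚ_[p])‖ = (p:ℝ)⁻¹) := by
  induction k with
  | zero => 
    refine ⟨fun _ => by simp [poch], fun h1 h2 => by omega⟩
  | succ k ih =>
    have ih := ih (by omega)
    have e : ((7/6 + k : ℚ)) = ((7 + 6 * k : ℕ) : ℚ) / (6:ℕ) := by push_cast; field_simp
    rw [poch_succ, e]
    constructor
    · intro h
      rw [Rat.cast_mul, norm_mul, ih.1 (by omega), norm_frac_unit p _ 6 h6, one_mul]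
      intro hd
      have := Nat.le_of_dvd (by omega) hd
      omega
    · intro h h1
      by_cases hlt : p ≤ 6*k+1
      · rw [Rat.cast_mul, norm_mul, ih.2 hlt h1, norm_frac_unit p _ 6 h6, mul_one]
        rintro ⟨c, hc⟩
        have : c < 2 := by
          by_contra hc2
          push Not at hc2
          have : p * 2 ≤ p * c := Nat.mul_le_mul_left _ hc2
          omega
        interval_cases c <;> omega
      · rw [Rat.cast_mul, norm_mul, ih.1 (by omega), one_mul]
        have e2 : 7 + 6*k = p ∨ 7 + 6*k ≠ p := by tauto
        rcases e2 with e2 | e2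
        · rw [e2]
          push_cast
          have := norm_nat_unit p 6 h6
          push_cast at this
          rw [norm_div, this, Padic.norm_p, div_one]
        · omega

theorem poch_mul_conj (x y : ℚ) (k : ℕ) :
    poch (x+y) k * poch (x-y) k = ∏ j ∈ Finset.range k, ((x+j)^2 - y^2) := by
  unfold poch
  rw [← Finset.prod_mul_distrib]
  apply Finset.prod_congr rfl
  intro j _; ring

theorem cong_poch (p : ℕ) [Fact p.Prime] (h3 : ¬ p ∣ 3) (a b k : ℕ) (hb : b ≠ 0) (h : ¬ p ∣ b) :
    ‖((poch (a/b) k ^ 2 : ℚ) : ℚ_[p]) -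
      ((poch (a/b + p/3) k * poch (a/b - p/3) k : ℚ) : ℚ_[p])‖ ≤ (p:ℝ)^(-2:ℤ) := by
  have hp : (1:ℝ) ≤ p := by exact_mod_cast (Fact.out : p.Prime).one_lt.le
  rw [poch_mul_conj, poch, ← Finset.prod_pow, Rat.cast_prod, Rat.cast_prod]
  refine (cong_prod (by positivity) (zpow_le_one_of_nonpos₀ hp (by norm_num)) k _ _ ?_ ?_).2
  · intro j _
    have := norm_frac_le p (a + b*j) b h
    have e : ((a:ℚ)/b + j) = ((a + b*j : ℕ):ℚ)/b := by push_cast; field_simp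
    rw [e, Rat.cast_pow, norm_pow]
    exact pow_le_one₀ (norm_nonneg _) this
  · intro j _
    rw [← Rat.cast_sub, sub_sub_cancel]
    push_cast
    have := norm_nat_unit p 3 h3
    push_cast at this
    rw [norm_pow, norm_div, this, Padic.norm_p, div_one, zpow_neg, inv_pow]
    norm_cast

theorem stmt10 (p : ℕ) [Fact p.Prime] (hodd : Odd p) (hp3 : p % 3 = 1) :
    ‖(((∑ k ∈ Finset.range ((p - 1) / 3 + 1),
          (-1 : ℚ) ^ k * poch (1/3) k ^ 3 / ((k.factorial : ℚ)) ^ 3) -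
        ((-1 : ℚ) ^ ((p - 1) / 3) * p *
          ∑ k ∈ Finset.range ((p - 1) / 3 + 1),
            poch (1/3) k ^ 2 * poch (1/2) k /
              ((k.factorial : ℚ) * poch (2/3) k * poch (7/6) k)) : ℚ) : ℚ_[p])‖ ≤
      (p : ℝ) ^ (-2 : ℤ) := by
  have hpr : p.Prime := Fact.out
  obtain ⟨n, hn⟩ : ∃ n, p = 3 * n + 1 := ⟨p / 3, by omega⟩
  have hn3 : (p-1)/3 = n := by omega
  have hp1 : (1:ℝ) < p := by exact_mod_cast hpr.one_lt
  have hodd' := Nat.odd_iff.1 hodd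
  have h7 : 7 ≤ p := by
    have := hpr.one_lt
    omega
  have h2 : ¬ p ∣ 2 := fun h => by have := Nat.le_of_dvd (by norm_num) h; omega
  have h3 : ¬ p ∣ 3 := fun h => by have := Nat.le_of_dvd (by norm_num) h; omega
  have h6 : ¬ p ∣ 6 := fun h => by have := Nat.le_of_dvd (by norm_num) h; omega
  have h1 : ¬ p ∣ 1 := fun h => by have := Nat.le_of_dvd (by norm_num) h; omega
  have hpq : (p:ℚ) = 3 * n + 1 := by exact_mod_cast hn
  set ε : ℝ := (p:ℝ)^(-2:ℤ) with hε
  have hε0 : 0 ≤ ε := by positivity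
  have hε1 : ε < 1 := zpow_lt_one_of_neg₀ hp1 (by norm_num)
  rw [hn3]
  have hc : ∀ k, poch (1+1/3-(1/3+p/3)) k ≠ 0 := by
    intro k
    unfold poch
    rw [Finset.prod_ne_zero_iff]
    intro j _ h0
    rw [hpq] at h0
    have : (2:ℚ) + 3 * j = 3 * n := by linarith
    have : 2 + 3 * j = 3 * n := by exact_mod_cast this
    omega
  have ex := exact_id (1/3+p/3) n hc
  have r1 : poch (1+1/3) n = p * poch (1/3) n := by
    have a1 := poch_succ_left (1/3) n
    have a2 := poch_succ (1/3) n
    rw [add_comm (1:ℚ) (1/3), hpq]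
    linear_combination 3 * a2 - 3 * a1
  have r2 : poch (1+1/3-(1/3+p/3)) n = (-1)^n * poch (1/3) n := by
    unfold poch
    rw [← Finset.prod_range_reflect, ← Finset.card_range n, ← Finset.prod_const, Finset.card_range,
      ← Finset.prod_mul_distrib]
    apply Finset.prod_congr rfl
    intro j hj
    have : j + 1 ≤ n := by simpa using hj
    rw [show n - 1 - j = n - (j+1) by omega, Nat.cast_sub this, hpq]
    push_cast; ring
  have r3 := (poch_pos (1/3) (by norm_num) n).ne'
  have r4 : poch (1+1/3) n / poch (1+1/3-(1/3+p/3)) n = (-1)^n * p := by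
    have s : ((-1:ℚ)^n)*(-1)^n = 1 := by rw [← mul_pow]; simp
    rw [div_eq_iff (hc n), r1, r2]
    linear_combination (-p * poch (1/3) n) * s
  rw [r4] at ex
  have e1 : (-n : ℚ) = 1/3 - p/3 := by rw [hpq]; ring
  have e2 : (1+1/3+n : ℚ) = 1 + p/3 := by rw [hpq]; ring
  have e3 : (1+1/3-(1/3+p/3) : ℚ) = 1 - p/3 := by ring
  rw [e1, e2, e3] at ex
  have n13 : ∀ k, ‖((poch (1/3) k : ℚ) : ℚ_[p])‖ ≤ 1 := fun k => by
    simpa using norm_poch_le p 1 3 k (by norm_num) h3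
  have n12 : ∀ k, ‖((poch (1/2) k : ℚ) : ℚ_[p])‖ ≤ 1 := fun k => by
    simpa using norm_poch_le p 1 2 k (by norm_num) h2
  have n23 : ∀ k ≤ n, ‖((poch (2/3) k : ℚ) : ℚ_[p])‖ = 1 := fun k hk => by
    have := norm_poch_unit p 2 3 k (by norm_num) h3 (by
      intro j hj hd
      have := Nat.le_of_dvd (by omega) hd
      omega)
    simpa using this
  have n76 : ∀ k ≤ n, ‖(p : ℚ_[p]) * ((poch (7/6) k : ℚ) : ℚ_[p])⁻¹‖ ≤ 1 := fun k hk => by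
    rw [norm_mul, norm_inv, Padic.norm_p]
    have := norm_poch76 p n h6 hn hodd' k hk
    rcases lt_or_ge (6*k+1) p with h | h
    · rw [this.1 h]; simpa using inv_le_one_of_one_le₀ hp1.le
    · rw [this.2 h hpr.one_lt, inv_inv, inv_mul_cancel₀ (by positivity)]
  have nf : ∀ k ≤ n, ‖(k.factorial : ℚ_[p])‖ = 1 := fun k hk =>
    norm_nat_unit p _ (fun h => by
      have := (hpr.dvd_factorial).1 h
      omega)
  have c13 : ∀ k, ‖((poch (1/3) k ^ 2 : ℚ) : ℚ_[p]) -
      ((poch (1/3 + p/3) k * poch (1/3 - p/3) k : ℚ) : ℚ_[p])‖ ≤ ε := fun k => by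
    simpa [hε] using cong_poch p h3 1 3 k (by norm_num) h3
  have c1 : ∀ k, ‖((poch 1 k ^ 2 : ℚ) : ℚ_[p]) -
      ((poch (1 + p/3) k * poch (1 - p/3) k : ℚ) : ℚ_[p])‖ ≤ ε := fun k => by
    simpa [hε] using cong_poch p h3 1 1 k (by norm_num) h1
  have pf : ∀ k : ℕ, poch 1 k = k.factorial := by
    intro k
    induction k with
    | zero => simp [poch]
    | succ k ih => rw [poch_succ, ih, Nat.factorial_succ]; push_cast; ring
  have nsq : ∀ k, ‖((poch (1/3) k ^ 2 : ℚ) : ℚ_[p])‖ ≤ 1 := fun k => by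
    rw [Rat.cast_pow, norm_pow]; exact pow_le_one₀ (norm_nonneg _) (n13 k)
  have dd : ∀ S1 S2 S1' S2' : ℚ, S1' = (-1)^n * p * S2' →
      S1 - (-1)^n*p*S2 = (S1 - S1') - (-1)^n * (p * (S2 - S2')) := by
    intro S1 S2 S1' S2' h; rw [h]; ring
  rw [dd _ _ _ _ ex, Rat.cast_sub, sub_eq_add_neg]
  refine (IsUltrametricDist.norm_add_le_max _ _).trans (max_le ?_ ?_)
  · rw [← Finset.sum_sub_distrib, Rat.cast_sum]
    refine cong_sum hε0 _ _ ?_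
    intro k hk
    have hk' : k ≤ n := by omega
    have t : (-1 : ℚ) ^ k * poch (1/3) k ^ 3 / ((k.factorial : ℚ)) ^ 3 -
        (-1:ℚ)^k * poch (1/3) k * (poch (1/3+p/3) k * poch (1/3-p/3) k) /
        (k.factorial * (poch (1-p/3) k * poch (1+p/3) k))
        = (-1)^k * poch (1/3) k * (k.factorial : ℚ)⁻¹ *
         (poch (1/3) k ^ 2 * (poch 1 k ^ 2)⁻¹ - (poch (1/3+p/3) k * poch (1/3-p/3) k) *
           (poch (1+p/3) k * poch (1-p/3) k)⁻¹) := by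
      rw [pf, mul_comm (poch (1-p/3) k)]
      simp only [div_eq_mul_inv, mul_inv, inv_pow]
      ring
    rw [t]
    have u1 : ‖((poch 1 k ^ 2 : ℚ) : ℚ_[p])‖ = 1 := by
      rw [pf]; push_cast; rw [norm_pow, nf k hk', one_pow]
    have key : ‖((poch (1/3) k ^ 2 : ℚ) : ℚ_[p]) * ((poch 1 k ^ 2 : ℚ) : ℚ_[p])⁻¹ -
        ((poch (1/3+p/3) k * poch (1/3-p/3) k : ℚ) : ℚ_[p]) *
           ((poch (1+p/3) k * poch (1-p/3) k : ℚ) : ℚ_[p])⁻¹‖ ≤ ε := by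
      refine cong_mul (nsq k) ?_ (c13 k) (cong_inv hε1 u1 (c1 k))
      rw [norm_inv, cong_unit hε1 u1 (c1 k), inv_one]
    rw [← Rat.cast_inv, ← Rat.cast_inv, ← Rat.cast_mul, ← Rat.cast_mul, ← Rat.cast_sub] at key
    rw [Rat.cast_mul, norm_mul]
    have q : ‖(((-1)^k * poch (1/3) k * (k.factorial : ℚ)⁻¹ : ℚ) : ℚ_[p])‖ ≤ 1 := by
      rw [Rat.cast_mul, Rat.cast_mul, norm_mul, norm_mul]
      push_cast
      rw [norm_inv, nf k hk']
      simpa using n13 k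
    exact (mul_le_mul q key (norm_nonneg _) zero_le_one).trans (by rw [one_mul])
  · rw [norm_neg, Rat.cast_mul, norm_mul]
    have s : ‖(((-1)^n : ℚ) : ℚ_[p])‖ = 1 := by push_cast; simp
    rw [s, one_mul, ← Finset.sum_sub_distrib, Finset.mul_sum, Rat.cast_sum]
    refine cong_sum hε0 _ _ ?_
    intro k hk
    have hk' : k ≤ n := by omega
    have t : (p:ℚ) * (poch (1/3) k ^ 2 * poch (1/2) k / (k.factorial * poch (2/3) k * poch (7/6) k) -
        poch (1/3+p/3) k * poch (1/3-p/3) k * poch (1/2) k /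
          (k.factorial * poch (2/3) k * poch (7/6) k))
        = (p * (poch (7/6) k)⁻¹) * poch (1/2) k * (k.factorial : ℚ)⁻¹ * (poch (2/3) k)⁻¹ *
          (poch (1/3) k ^ 2 - poch (1/3+p/3) k * poch (1/3-p/3) k) := by
      simp only [div_eq_mul_inv, mul_inv]
      ring
    rw [t, Rat.cast_mul, norm_mul, Rat.cast_sub]
    have q : ‖(((p * (poch (7/6) k)⁻¹) * poch (1/2) k * (k.factorial : ℚ)⁻¹ * (poch (2/3) k)⁻¹ : ℚ) : ℚ_[p])‖ ≤ 1 := by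
      rw [Rat.cast_mul, Rat.cast_mul, Rat.cast_mul, Rat.cast_mul, norm_mul, norm_mul, norm_mul,
        Rat.cast_inv (poch (2/3) k), norm_inv, n23 k hk', Rat.cast_inv (k.factorial : ℚ), norm_inv,
        Rat.cast_natCast, Rat.cast_natCast, nf k hk', Rat.cast_inv, inv_one, mul_one, mul_one]
      exact mul_le_one₀ (n76 k hk') (norm_nonneg _) (n12 k)
    exact (mul_le_mul q (c13 k) (norm_nonneg _) zero_le_one).trans (by rw [one_mul])
end

section
/- Let p be a prime with p ≡ 1 (mod 4). Then Σ_{k=0}^{(p−1)/4} (−1)^k (8k+1) (1/4)_k^3 / k!^3 ≡ (−1)^{(p−1)/4} · p (mod p^3). -/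
open Finset

/-- summand of the perturbed series, without the linear factor -/
def Bf (n k : ℕ) : ℚ := ∏ j ∈ Finset.range k,
  (-(((1:ℚ)/4+j)*((j:ℚ)-n)*((n:ℚ)+1/2+j)/((1+(j:ℚ))*((j:ℚ)+3/4-n)*((n:ℚ)+5/4+j))))

lemma Bf_succ (n k : ℕ) : Bf n (k+1) = Bf n k *
  (-(((1:ℚ)/4+k)*((k:ℚ)-n)*((n:ℚ)+1/2+k)/((1+(k:ℚ))*((k:ℚ)+3/4-n)*((n:ℚ)+5/4+k)))) := by
  unfold Bf
  rw [Finset.prod_range_succ]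

lemma ne_aux (k n : ℕ) : (4*(k:ℚ)+3-4*n) ≠ 0 := by
  intro h
  have h2 : (4*(k:ℤ)+3-4*n) = 0 := by exact_mod_cast h
  omega

lemma ne_aux2 (k n : ℕ) : (4*(k:ℚ)-1-4*n) ≠ 0 := by
  intro h
  have h2 : (4*(k:ℤ)-1-4*n) = 0 := by exact_mod_cast h
  omega

lemma Bf_step (n k : ℕ) : Bf n (k+1) = Bf n k *
  (-((4*k+1)*((k:ℚ)-n)*(2*n+1+2*k)*2/((1+(k:ℚ))*(4*k+3-4*n)*(4*(n:ℚ)+5+4*k)))) := by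
  rw [Bf_succ]
  have h1 := ne_aux k n
  have h2 : (1+(k:ℚ)) ≠ 0 := by positivity
  have h3 : (4*(n:ℚ)+5+4*k) ≠ 0 := by positivity
  have h4 : ((k:ℚ)+3/4-n) ≠ 0 := by
    intro h; apply h1; linarith
  have h5 : ((n:ℚ)+5/4+k) ≠ 0 := by positivity
  congr 2
  rw [div_eq_div_iff (by positivity) (by positivity)]
  ring

lemma Bf_ratio (n k : ℕ) (hk : k ≤ n) : Bf (n+1) k =
    Bf n k * (((n:ℚ)+1)*(2*n+1+2*k)*(4*k-1-4*n)*(4*n+5) /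
      (((k:ℚ)-1-n)*(2*n+1)*(4*n+1)*(4*n+5+4*k))) := by
  induction k with
  | zero =>
    simp only [Bf, Finset.range_zero, Finset.prod_empty, Nat.cast_zero]
    have h1 : (0 - 1 - (n:ℚ)) ≠ 0 := by
      have : (0:ℚ) ≤ n := by positivity
      linarith
    have h2 : (2*(n:ℚ)+1) ≠ 0 := by positivity
    have h3 : (4*(n:ℚ)+1) ≠ 0 := by positivity
    have h4 : (4*(n:ℚ)+5) ≠ 0 := by positivity
    rw [one_mul, eq_comm, div_eq_one_iff_eq
      (mul_ne_zero (mul_ne_zero (mul_ne_zero h1 h2) h3) (by simpa using h4))]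
    ring
  | succ k ih =>
    rw [Bf_step, Bf_step, ih (by omega)]
    push_cast
    have a1 := ne_aux k n
    have a2 := ne_aux2 k n
    have a3 : (1+(k:ℚ)) ≠ 0 := by positivity
    have a4 : (4*(n:ℚ)+5+4*k) ≠ 0 := by positivity
    have a5 : (4*(n:ℚ)+9+4*k) ≠ 0 := by positivity
    have hkn : (k:ℚ) + 1 ≤ n := by exact_mod_cast hk
    have a6 : ((k:ℚ)-1-n) ≠ 0 := by linarith
    have h2 : (2*(n:ℚ)+1) ≠ 0 := by positivity
    have h3 : (4*(n:ℚ)+1) ≠ 0 := by positivity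
    have e1 : (4*(k:ℚ)+3-4*(n+1)) = 4*k-1-4*n := by ring
    have e2 : (4*((n:ℚ)+1)+5+4*k) = 4*n+9+4*k := by ring
    have e3 : (4*(n:ℚ)+5+4*(k+1)) = 4*n+9+4*k := by ring
    have e4 : ((k:ℚ)+1-1-n) = k-n := by ring
    have e5 : (4*((k:ℚ)+1)-1-4*n) = 4*k+3-4*n := by ring
    have e6 : ((k:ℚ)-(n+1)) = k-1-n := by ring
    rw [e1, e2, e3, e4, e5, e6]
    have a8 : ((k:ℚ)-n) ≠ 0 := by linarith
    rw [mul_assoc (Bf n k), mul_assoc (Bf n k)]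
    congr 1
    generalize hD : (4*(k:ℚ)+3-4*n) = D at *
    generalize hE : (4*(k:ℚ)-1-4*n) = E at *
    generalize hF : ((k:ℚ)-1-n) = F at *
    generalize hG : ((k:ℚ)-n) = G at *
    field_simp
    ring

lemma partial_sum (n K : ℕ) (hK : K ≤ n) :
    ∑ k ∈ Finset.range (K+1),
      (-((8*(k:ℚ)+1) * Bf (n+1) k)/(4*n+5) - (8*(k:ℚ)+1) * Bf n k/(4*n+1)) =
    -(8*(n:ℚ)+6)*(4*K+1)*(2*K+2*n+1)*Bf n K/((4*n+1)*(2*n+1)*(4*n+5+4*K)) := by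
  have h2 : (2*(n:ℚ)+1) ≠ 0 := by positivity
  have h3 : (4*(n:ℚ)+1) ≠ 0 := by positivity
  have h4 : (4*(n:ℚ)+5) ≠ 0 := by positivity
  induction K with
  | zero =>
    simp [Bf]
    field_simp
    ring
  | succ K ih =>
    rw [Finset.sum_range_succ, ih (by omega), Bf_ratio n (K+1) hK, Bf_step]
    push_cast
    have a1 := ne_aux K n
    have a3 : (1+(K:ℚ)) ≠ 0 := by positivity
    have a4 : (4*(n:ℚ)+5+4*K) ≠ 0 := by positivity
    have a5 : (4*(n:ℚ)+9+4*K) ≠ 0 := by positivity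
    have hkn : (K:ℚ) + 1 ≤ n := by exact_mod_cast hK
    have e3 : (4*(n:ℚ)+5+4*(K+1)) = 4*n+9+4*K := by ring
    have e4 : ((K:ℚ)+1-1-n) = K-n := by ring
    have e5 : (4*((K:ℚ)+1)-1-4*n) = 4*K+3-4*n := by ring
    rw [e3, e4, e5]
    have a8 : ((K:ℚ)-n) ≠ 0 := by linarith
    generalize hD : (4*(K:ℚ)+3-4*n) = D at *
    generalize hG : ((K:ℚ)-n) = G at *
    field_simp
    simp only [← hD, ← hG]
    ring

lemma closed_form (n : ℕ) :
    ∑ k ∈ Finset.range (n+1), (8*(k:ℚ)+1) * Bf n k = (-1)^n * (4*n+1) := by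
  induction n with
  | zero => simp [Bf]
  | succ n ih =>
    have h := partial_sum n n le_rfl
    rw [Finset.sum_sub_distrib, ← Finset.sum_div, ← Finset.sum_div, ih] at h
    rw [Finset.sum_range_succ, Bf_step, Bf_ratio n n le_rfl]
    rw [Finset.sum_neg_distrib] at h
    have h2 : (2*(n:ℚ)+1) ≠ 0 := by positivity
    have h3 : (4*(n:ℚ)+1) ≠ 0 := by positivity
    have h4 : (4*(n:ℚ)+5) ≠ 0 := by positivity
    have h5 : (8*(n:ℚ)+5) ≠ 0 := by positivity
    have h6 : (8*(n:ℚ)+9) ≠ 0 := by positivity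
    have h7 : (1+(n:ℚ)) ≠ 0 := by positivity
    have hs : ∑ k ∈ Finset.range (n+1), (8*(k:ℚ)+1) * Bf (n+1) k =
       -(4*n+5) * (-(8*(n:ℚ)+6)*(4*n+1)*(2*n+2*n+1)*Bf n n/((4*n+1)*(2*n+1)*(4*n+5+4*n))
         + (-1)^n * (4*n+1)/(4*n+1)) := by
      rw [← h]
      field_simp
      ring
    rw [hs]
    push_cast
    have e1 : (4*(n:ℚ)+3-4*(n+1)) = -1 := by ring
    have e2 : (4*((n:ℚ)+1)+5+4*n) = 8*n+9 := by ring
    have e3 : (4*(n:ℚ)+5+4*n) = 8*n+5 := by ring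
    have e4 : ((n:ℚ)-1-n) = -1 := by ring
    have e5 : (4*(n:ℚ)-1-4*n) = -1 := by ring
    have e6 : ((n:ℚ)-(n+1)) = -1 := by ring
    rw [e1, e2, e3, e4, e5, e6, pow_succ]
    field_simp
    ring

/-- p-adic valuation at least m -/
def J (p m : ℕ) [Fact p.Prime] (x : ℚ) : Prop := ‖(x : ℚ_[p])‖ ≤ (p : ℝ) ^ (-(m : ℤ))

section
variable {p : ℕ} [hp : Fact p.Prime]

lemma J_add {m : ℕ} {x y : ℚ} (hx : J p m x) (hy : J p m y) : J p m (x + y) := by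
  unfold J at *
  push_cast
  exact (Padic.nonarchimedean _ _).trans (max_le hx hy)

lemma J_neg {m : ℕ} {x : ℚ} (hx : J p m x) : J p m (-x) := by
  unfold J at *
  push_cast
  rwa [norm_neg]

lemma J_sub {m : ℕ} {x y : ℚ} (hx : J p m x) (hy : J p m y) : J p m (x - y) := by
  rw [sub_eq_add_neg]; exact J_add hx (J_neg hy)

lemma J_mul {m l : ℕ} {x y : ℚ} (hx : J p m x) (hy : J p l y) : J p (m + l) (x * y) := by
  unfold J at *
  have h0 : (p:ℝ) ≠ 0 := by exact_mod_cast hp.out.ne_zero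
  push_cast
  rw [norm_mul, neg_add, zpow_add₀ h0]
  exact mul_le_mul hx hy (norm_nonneg _) (by positivity)

lemma J_int (z : ℤ) : J p 0 (z : ℚ) := by
  unfold J
  simpa using Padic.norm_int_le_one (p := p) z

lemma J_p : J p 1 (p : ℚ) := by
  unfold J
  simp

lemma J_mono {m l : ℕ} (h : l ≤ m) {x : ℚ} (hx : J p m x) : J p l x := by
  unfold J at *
  refine hx.trans ?_
  have : (1:ℝ) ≤ p := by exact_mod_cast hp.out.one_lt.le
  exact zpow_le_zpow_right₀ this (by omega)

lemma J_inv (z : ℤ) (h : ¬ (p:ℤ) ∣ z) : J p 0 (1 / (z : ℚ)) := by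
  unfold J
  have h1 := (Padic.norm_intCast_lt_one_iff (p := p) (k := z)).not.mpr h
  have h2 := Padic.norm_int_le_one (p := p) z
  have : ‖(z:ℚ_[p])‖ = 1 := le_antisymm h2 (not_lt.mp h1)
  push_cast
  simp [this]

lemma J_zero (m : ℕ) : J p m 0 := by
  unfold J
  simp

lemma J_sum {m : ℕ} (s : Finset ℕ) (f : ℕ → ℚ) (h : ∀ i ∈ s, J p m (f i)) :
    J p m (∑ i ∈ s, f i) := by
  induction s using Finset.cons_induction with
  | empty => simpa using J_zero m
  | cons a s ha ih =>
    rw [Finset.sum_cons]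
    exact J_add (h _ (by simp)) (ih fun i hi => h i (by simp [hi]))

lemma J_mul0 {m : ℕ} {x y : ℚ} (hx : J p m x) (hy : J p 0 y) : J p m (x * y) := by
  simpa using J_mul hx hy

lemma J_0mul {m : ℕ} {x y : ℚ} (hx : J p 0 x) (hy : J p m y) : J p m (x * y) := by
  simpa using J_mul hx hy

end

/-- unperturbed summand -/
def tf (k : ℕ) : ℚ := ∏ j ∈ Finset.range k, (-(((1:ℚ)/4+j)/(1+j))^3)

/-- second order coefficient -/
def cf (k : ℕ) : ℚ := ∑ j ∈ Finset.range k, ((1/(1+(j:ℚ)))^2 - (1/((1:ℚ)/4+j))^2)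

/-- reduction of the second order coefficient -/
def cr (n k : ℕ) : ℚ := ∑ j ∈ Finset.range k, ((1/(1+(j:ℚ)))^2 - (1/((n:ℚ)-j))^2)

lemma tf_eq (k : ℕ) : tf k = (-1)^k * poch (1/4) k ^ 3 / (k.factorial : ℚ)^3 := by
  induction k with
  | zero => simp [tf, poch]
  | succ k ih =>
    have h : tf (k+1) = tf k * (-(((1:ℚ)/4+k)/(1+k))^3) := by
      unfold tf; rw [Finset.prod_range_succ]
    have h' : poch (1/4) (k+1) = poch (1/4) k * (1/4+k) := by
      unfold poch; rw [Finset.prod_range_succ]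
    have h1 : (k.factorial:ℚ) ≠ 0 := by exact_mod_cast k.factorial_ne_zero
    have h2 : (1+(k:ℚ)) ≠ 0 := by positivity
    have h3 : ((k:ℚ)+1) ≠ 0 := by positivity
    rw [h, h', ih, Nat.factorial_succ, pow_succ (-1:ℚ)]
    push_cast
    rw [add_comm (k:ℚ) 1, div_pow, mul_pow, mul_pow]
    field_simp

section
variable {p : ℕ} [hp : Fact p.Prime]

set_option linter.unusedVariables false

lemma nd (z : ℤ) (h0 : z ≠ 0) (h1 : -(p:ℤ) < z) (h2 : z < p) : ¬ (p:ℤ) ∣ z := by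
  intro h
  apply h0
  apply Int.eq_zero_of_abs_lt_dvd h
  rw [abs_lt]; exact ⟨h1, h2⟩


lemma J_quarter {n : ℕ} (hn : p = 4*n+1) (hn1 : 1 ≤ n) : J p 0 ((1:ℚ)/4) := by
  have := J_inv (p := p) 4 (nd 4 (by omega) (by omega) (by omega))
  simpa using this

lemma J_v {n : ℕ} (hn : p = 4*n+1) (hn1 : 1 ≤ n) (j : ℕ) (hj : j < n) : J p 0 (1/(1+(j:ℚ))) := by
  have := J_inv (p := p) (1+j) (nd _ (by omega) (by omega) (by omega))
  simpa using this

lemma J_w {n : ℕ} (hn : p = 4*n+1) (hn1 : 1 ≤ n) (j : ℕ) (hj : j < n) : J p 0 (1/((n:ℚ)-j)) := by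
  have := J_inv (p := p) (n-j) (nd _ (by omega) (by omega) (by omega))
  simpa using this

lemma J_u {n : ℕ} (hn : p = 4*n+1) (hn1 : 1 ≤ n) (j : ℕ) (hj : j < n) : J p 0 (1/((1:ℚ)/4+j)) := by
  have := J_mul (J_int (p := p) 4) (J_inv (p := p) (1+4*j) (nd _ (by omega) (by omega) (by omega)))
  have e : (1/((1:ℚ)/4+j)) = ((4:ℤ):ℚ) * (1/((1+4*j:ℤ):ℚ)) := by
    push_cast
    have : (1+4*(j:ℚ)) ≠ 0 := by positivity
    have : ((1:ℚ)/4+j) ≠ 0 := by positivity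
    field_simp
  rw [e]
  exact this

lemma J_a {n : ℕ} (hn : p = 4*n+1) (hn1 : 1 ≤ n) (j : ℕ) : J p 0 ((1:ℚ)/4+j) :=
  J_add (J_quarter hn hn1) (by simpa using J_int (p := p) j)

lemma J_r {n : ℕ} (hn : p = 4*n+1) (hn1 : 1 ≤ n) (j : ℕ) (hj : j < n) : J p 0 (((1:ℚ)/4+j)/(1+j)) := by
  rw [div_eq_mul_one_div]
  exact J_mul (J_a hn hn1 j) (J_v hn hn1 j hj)

lemma J_sq {n : ℕ} (hn : p = 4*n+1) (hn1 : 1 ≤ n) {m : ℕ} {x : ℚ} (h : J p m x) : J p (m+m) (x^2) := by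
  rw [sq]; exact J_mul h h

lemma J_cube {n : ℕ} (hn : p = 4*n+1) (hn1 : 1 ≤ n) {x : ℚ} (h : J p 0 x) : J p 0 (x^3) := by
  rw [pow_succ]; exact J_mul (J_sq hn hn1 h) h

lemma J_t {n : ℕ} (hn : p = 4*n+1) (hn1 : 1 ≤ n) (k : ℕ) (hk : k ≤ n) : J p 0 (tf k) := by
  induction k with
  | zero => simpa [tf] using J_int (p := p) 1
  | succ k ih =>
    have h : tf (k+1) = tf k * (-(((1:ℚ)/4+k)/(1+k))^3) := by
      unfold tf; rw [Finset.prod_range_succ]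
    rw [h]
    exact J_mul (ih (by omega)) (J_neg (J_cube hn hn1 (J_r hn hn1 k (by omega))))

lemma J_c {n : ℕ} (hn : p = 4*n+1) (hn1 : 1 ≤ n) (k : ℕ) (hk : k ≤ n) : J p 0 (cf k) := by
  unfold cf
  apply J_sum
  intro i hi
  have hi' : i < n := by have := Finset.mem_range.mp hi; omega
  exact J_sub (J_sq hn hn1 (J_v hn hn1 i hi')) (J_sq hn hn1 (J_u hn hn1 i hi'))

lemma J_x {n : ℕ} (hn : p = 4*n+1) (hn1 : 1 ≤ n) : J p 1 ((n:ℚ)+1/4) := by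
  have e : ((n:ℚ)+1/4) = (p:ℚ) * (1/4) := by rw [hn]; push_cast; ring
  rw [e]
  exact J_mul J_p (J_quarter hn hn1)

lemma J_z {n : ℕ} (hn : p = 4*n+1) (hn1 : 1 ≤ n) (j : ℕ) (hj : j < n) : J p 0 (1/((1+(j:ℚ))^2 - ((n:ℚ)+1/4)^2)) := by
  have h1 := J_inv (p := p) (4*j+3-4*n) (nd _ (by omega) (by omega) (by omega))
  have h2 := J_inv (p := p) (4*j+5+4*n) (by
    have := nd (p := p) (4*(j:ℤ)+4) (by omega) (by omega) (by omega)
    intro h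
    apply this
    have e : (4*(j:ℤ)+4) = 4*j+5+4*n - p := by rw [hn]; push_cast; ring
    rw [e]
    exact dvd_sub_self_right.mpr h)
  have h3 := J_mul (J_int (p := p) 16) (J_mul h1 h2)
  have e : (1/((1+(j:ℚ))^2 - ((n:ℚ)+1/4)^2)) =
      ((16:ℤ):ℚ) * (1/((4*j+3-4*n:ℤ):ℚ) * (1/((4*j+5+4*n:ℤ):ℚ))) := by
    push_cast
    have a1 := ne_aux j n
    have a2 : (4*(j:ℚ)+5+4*n) ≠ 0 := by positivity
    have e : (1+(j:ℚ))^2 - ((n:ℚ)+1/4)^2 = (4*j+3-4*n)*(4*j+5+4*n)/16 := by ring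
    rw [e]
    field_simp
  rw [e]
  exact h3

lemma B_cong {n : ℕ} (hn : p = 4*n+1) (hn1 : 1 ≤ n) (k : ℕ) (hk : k ≤ n) :
    J p 3 (Bf n k - tf k * (1 + ((n:ℚ)+1/4)^2 * cf k)) := by
  induction k with
  | zero => simpa [Bf, tf, cf] using J_zero (p := p) 3
  | succ k ih =>
    have ih := ih (by omega)
    have hk' : k < n := by omega
    have h : tf (k+1) = tf k * (-(((1:ℚ)/4+k)/(1+k))^3) := by
      unfold tf; rw [Finset.prod_range_succ]
    have hc : cf (k+1) = cf k + ((1/(1+(k:ℚ)))^2 - (1/((1:ℚ)/4+k))^2) := by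
      unfold cf; rw [Finset.sum_range_succ]
    have jt := J_t hn hn1 k (by omega)
    have jc := J_c hn hn1 k (by omega)
    have jx := J_sq hn hn1 (J_x hn hn1)
    have jr := J_neg (J_cube hn hn1 (J_r hn hn1 k hk'))
    have jv := J_sq hn hn1 (J_v hn hn1 k hk')
    have jd := J_sub jv (J_sq hn hn1 (J_u hn hn1 k hk'))
    have jz := J_z hn hn1 k hk'
    have ne1 : ((1:ℚ)/4+k) ≠ 0 := by positivity
    have ne2 : (1+(k:ℚ)) ≠ 0 := by positivity
    have ne3 : ((1+(k:ℚ))^2 - ((n:ℚ)+1/4)^2) ≠ 0 := by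
      have a1 := ne_aux k n
      have a2 : (4*(k:ℚ)+5+4*n) ≠ 0 := by positivity
      have e : (1+(k:ℚ))^2 - ((n:ℚ)+1/4)^2 = (4*k+3-4*n)*(4*k+5+4*n)/16 := by ring
      rw [e]
      positivity
    have hB : Bf n (k+1) = Bf n k * ((-(((1:ℚ)/4+k)/(1+k))^3) *
        (1 + ((n:ℚ)+1/4)^2 * ((1/(1+(k:ℚ)))^2 - (1/((1:ℚ)/4+k))^2) +
          ((n:ℚ)+1/4)^2 * (((n:ℚ)+1/4)^2 * (((1/(1+(k:ℚ)))^2 - (1/((1:ℚ)/4+k))^2) *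
            (1/((1+(k:ℚ))^2 - ((n:ℚ)+1/4)^2)))))) := by
      rw [Bf_succ]
      congr 1
      have e1 : (((1:ℚ)/4+k)*((k:ℚ)-n)*((n:ℚ)+1/2+k)) =
        (1/4+k) * ((1/4+k)^2 - ((n:ℚ)+1/4)^2) := by ring
      have e2 : ((1+(k:ℚ))*((k:ℚ)+3/4-n)*((n:ℚ)+5/4+k)) =
        (1+k) * ((1+(k:ℚ))^2 - ((n:ℚ)+1/4)^2) := by ring
      rw [e1, e2]
      generalize ((n:ℚ)+1/4)^2 = X at *
      generalize ((1:ℚ)/4+k) = a at *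
      generalize (1+(k:ℚ)) = b at *
      field_simp
      ring
    rw [h, hc, hB]
    generalize ((n:ℚ)+1/4)^2 = X at *
    generalize ((1/(1+(k:ℚ)))^2 - (1/((1:ℚ)/4+k))^2) = d at *
    generalize (1/((1+(k:ℚ))^2 - X)) = z at *
    generalize (-(((1:ℚ)/4+k)/(1+k))^3) = r at *
    generalize tf k = t at *
    generalize cf k = c at *
    have e : Bf n k * (r * (1 + X * d + X * (X * (d * z)))) - t * r * (1 + X * (c + d)) =
      (Bf n k - t * (1 + X * c)) * (r * (1 + X * d + X * (X * (d * z)))) +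
        (X * X) * ((t * r) * (c * d + (1 + X * c) * (d * z))) := by ring
    rw [e]
    have jX : J p 0 X := J_mono (by omega) jx
    have j1 : J p 0 (1:ℚ) := by simpa using J_int (p := p) 1
    have jXX : J p 3 (X * X) := J_mono (by omega) (J_mul jx jx)
    refine J_add (J_mul0 ih ?_) (J_mul0 jXX ?_)
    · exact J_mul jr (J_add (J_add j1 (J_mul jX jd)) (J_mul jX (J_mul jX (J_mul jd jz))))
    · exact J_mul (J_mul jt jr) (J_add (J_mul jc jd)
        (J_mul (J_add j1 (J_mul jX jc)) (J_mul jd jz)))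

lemma t_cong {n : ℕ} (hn : p = 4*n+1) (hn1 : 1 ≤ n) (k : ℕ) (hk : k ≤ n) : J p 1 (tf k - (n.choose k : ℚ)^3) := by
  induction k with
  | zero => simpa [tf] using J_zero (p := p) 1
  | succ k ih =>
    have ih := ih (by omega)
    have hk' : k < n := by omega
    have h : tf (k+1) = tf k * (-(((1:ℚ)/4+k)/(1+k))^3) := by
      unfold tf; rw [Finset.prod_range_succ]
    have hch : (n.choose (k+1) : ℚ) = n.choose k * (((n:ℚ)-k) * (1/(1+k))) := by
      have h1 := Nat.choose_succ_right_eq n k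
      have h2 : (n.choose (k+1) : ℚ) * (k+1) = n.choose k * ((n:ℚ)-k) := by
        rw [← Nat.cast_sub hk'.le]; exact_mod_cast h1
      have ne2 : (1+(k:ℚ)) ≠ 0 := by positivity
      field_simp
      linarith
    have jr := J_neg (J_cube hn hn1 (J_r hn hn1 k hk'))
    have jv := J_v hn hn1 k hk'
    have ja := J_a hn hn1 k
    have jx := J_x hn hn1
    have jC : J p 0 ((n.choose k : ℚ)) := by simpa using J_int (p := p) (n.choose k)
    have jb : J p 0 ((n:ℚ)-k) := by simpa using J_int (p := p) (n-k)
    have e : tf (k+1) - (n.choose (k+1) : ℚ)^3 =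
       (tf k - (n.choose k : ℚ)^3) * (-(((1:ℚ)/4+k)/(1+k))^3) +
       ((n:ℚ)+1/4) * ((-(n.choose k : ℚ)^3 * (1/(1+(k:ℚ)))^3) *
         ((1/4+k)^2 - (1/4+k)*((n:ℚ)-k) + ((n:ℚ)-k)^2)) := by
      rw [h, hch]
      ring
    rw [e]
    exact J_add (J_mul0 ih jr) (J_mul0 jx (J_mul (J_mul (J_neg (J_cube hn hn1 jC))
      (J_cube hn hn1 jv)) (J_add (J_sub (J_sq hn hn1 ja) (J_mul ja jb)) (J_sq hn hn1 jb))))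

lemma c_cong {n : ℕ} (hn : p = 4*n+1) (hn1 : 1 ≤ n) (k : ℕ) (hk : k ≤ n) : J p 1 (cf k - cr n k) := by
  unfold cf cr
  rw [← Finset.sum_sub_distrib]
  apply J_sum
  intro i hi
  have hi' : i < n := by have := Finset.mem_range.mp hi; omega
  have ju := J_u hn hn1 i hi'
  have jw := J_w hn hn1 i hi'
  have ja := J_a hn hn1 i
  have jx := J_x hn hn1
  have jb : J p 0 ((n:ℚ)-i) := by simpa using J_int (p := p) (n-i)
  have ne1 : ((1:ℚ)/4+i) ≠ 0 := by positivity
  have ne2 : ((n:ℚ)-i) ≠ 0 := by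
    have : (i:ℚ) < n := by exact_mod_cast hi'
    linarith
  have e : ((1/(1+(i:ℚ)))^2 - (1/((1:ℚ)/4+i))^2) - ((1/(1+(i:ℚ)))^2 - (1/((n:ℚ)-i))^2) =
     ((n:ℚ)+1/4) * (((1/4+i) - ((n:ℚ)-i)) * ((1/((1:ℚ)/4+i))^2 * (1/((n:ℚ)-i))^2)) := by
    have e0 : (n:ℚ)+1/4 = (1/4+i) + ((n:ℚ)-i) := by ring
    rw [e0]
    generalize ((1:ℚ)/4+i) = a at *
    generalize ((n:ℚ)-i) = b at *
    rw [sub_sub_sub_cancel_left]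
    field_simp
    ring
  rw [e]
  exact J_mul0 jx (J_mul (J_sub ja jb) (J_mul (J_sq hn hn1 ju) (J_sq hn hn1 jw)))

end

/-- harmonic numbers of order two -/
def H2 (k : ℕ) : ℚ := ∑ j ∈ Finset.range k, (1/(1+(j:ℚ)))^2

lemma cr_eq (n k : ℕ) (hk : k ≤ n) : cr n k = H2 k + H2 (n-k) - H2 n := by
  induction k with
  | zero => simp [cr, H2]
  | succ k ih =>
    have ih := ih (by omega)
    have h1 : cr n (k+1) = cr n k + ((1/(1+(k:ℚ)))^2 - (1/((n:ℚ)-k))^2) := by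
      unfold cr; rw [Finset.sum_range_succ]
    have h2 : ∀ m, H2 (m+1) = H2 m + (1/(1+(m:ℚ)))^2 := by
      intro m; unfold H2; rw [Finset.sum_range_succ]
    obtain ⟨m, rfl⟩ : ∃ m, n = m + k + 1 := ⟨n - k - 1, by omega⟩
    have e1 : m + k + 1 - k = m + 1 := by omega
    have e2 : m + k + 1 - (k+1) = m := by omega
    rw [e1, h2 m] at ih
    rw [h1, ih, e2, h2 k]
    push_cast
    have e3 : (m:ℚ)+k+1-k = 1+m := by ring
    rw [e3]
    ring

lemma anti_sum (n : ℕ) :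
    ∑ k ∈ Finset.range (n+1), (8*(k:ℚ)-4*n) * ((n.choose k : ℚ)^3 * cr n k) = 0 := by
  have h := Finset.sum_range_reflect
    (fun k : ℕ => (8*(k:ℚ)-4*n) * ((n.choose k : ℚ)^3 * cr n k)) (n+1)
  have h2 : ∑ j ∈ Finset.range (n+1), (fun k : ℕ => (8*(k:ℚ)-4*n) * ((n.choose k : ℚ)^3 * cr n k))
      (n + 1 - 1 - j) =
      ∑ k ∈ Finset.range (n+1), -((8*(k:ℚ)-4*n) * ((n.choose k : ℚ)^3 * cr n k)) := by
    apply Finset.sum_congr rfl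
    intro k hk
    have hk' : k ≤ n := by have := Finset.mem_range.mp hk; omega
    simp only [Nat.add_sub_cancel]
    rw [Nat.choose_symm hk', cr_eq n k hk', cr_eq n (n-k) (by omega), Nat.sub_sub_self hk',
      Nat.cast_sub hk']
    ring
  rw [h2, Finset.sum_neg_distrib] at h
  linarith

theorem stmt16 (p : ℕ) [Fact p.Prime] (hp4 : p % 4 = 1) :
    ‖(((∑ k ∈ Finset.range ((p - 1) / 4 + 1),
          (-1 : ℚ) ^ k * (8 * (k : ℚ) + 1) * poch (1/4) k ^ 3 /
            ((k.factorial : ℚ)) ^ 3) -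
        ((-1 : ℚ) ^ ((p - 1) / 4) * p) : ℚ) : ℚ_[p])‖ ≤
      (p : ℝ) ^ (-3 : ℤ) := by
  obtain ⟨n, hn⟩ : ∃ n, p = 4*n+1 := ⟨p/4, by omega⟩
  have hp1 := (Fact.out : p.Prime).one_lt
  have hn1 : 1 ≤ n := by omega
  have hdiv : (p-1)/4 = n := by omega
  rw [hdiv]
  change J p 3 _
  have e0 : ∀ k ∈ Finset.range (n+1), (-1 : ℚ) ^ k * (8 * (k : ℚ) + 1) * poch (1/4) k ^ 3 /
            ((k.factorial : ℚ)) ^ 3 = (8*(k:ℚ)+1) * Bf n k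
        - (8*(k:ℚ)+1) * (Bf n k - tf k * (1 + ((n:ℚ)+1/4)^2 * cf k))
        - ((n:ℚ)+1/4)^2 * ((8*(k:ℚ)-4*n) * ((n.choose k : ℚ)^3 * cr n k))
        - ((n:ℚ)+1/4)^2 * ((4*n+1) * (tf k * cf k) + (8*(k:ℚ)-4*n) *
           ((tf k - (n.choose k : ℚ)^3) * cf k + (n.choose k : ℚ)^3 * (cf k - cr n k))) := by
    intro k _
    have : (-1 : ℚ) ^ k * (8 * (k : ℚ) + 1) * poch (1/4) k ^ 3 /
            ((k.factorial : ℚ)) ^ 3 = (8*(k:ℚ)+1) * tf k := by rw [tf_eq]; ring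
    rw [this]
    ring
  rw [Finset.sum_congr rfl e0]
  rw [Finset.sum_sub_distrib, Finset.sum_sub_distrib, Finset.sum_sub_distrib, closed_form,
    ← Finset.mul_sum _ _ (((n:ℚ)+1/4)^2), anti_sum]
  have hpq : (p:ℚ) = 4*n+1 := by rw [hn]; push_cast; ring
  rw [hpq]
  have e1 : ∀ A B C : ℚ, A - B - ((n:ℚ)+1/4)^2 * 0 - C - A = -(B + C) := by intros; ring
  rw [e1]
  refine J_neg (J_add (J_sum _ _ ?_) (J_sum _ _ ?_))
  · intro k hk
    have hk' : k ≤ n := by have := Finset.mem_range.mp hk; omega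
    refine J_0mul ?_ (B_cong hn hn1 k hk')
    simpa using J_int (p := p) (8*k+1)
  · intro k hk
    have hk' : k ≤ n := by have := Finset.mem_range.mp hk; omega
    refine J_mul (J_sq hn hn1 (J_x hn hn1)) (l := 1) ?_
    have jc := J_c hn hn1 k hk'
    have jp : J p 1 (4*(n:ℚ)+1) := hpq ▸ J_p
    have jl : J p 0 (8*(k:ℚ)-4*n) := by simpa using J_int (p := p) (8*k-4*n)
    have jC : J p 0 ((n.choose k : ℚ)) := by simpa using J_int (p := p) (n.choose k)
    exact J_add (J_mul0 jp (J_mul (J_t hn hn1 k hk') jc)) (J_0mul jl (J_add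
      (J_mul0 (t_cong hn hn1 k hk') jc) (J_0mul (J_cube hn hn1 jC) (c_cong hn hn1 k hk'))))
end
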